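/- Let G be a connected graph on [n]. Then J_G is unmixed if and only if for all T ∈ 𝒞(G) one has c(T) = |T| + 1, where c(T) is the number of connected components of the induced subgraph of G on [n]∖T. -/

import Mathlib

open MvPolynomial

noncomputable section

/-- The binomial edge ideal of a simple graph `G` on vertex type `V`, inside the
polynomial ring `K[x_i, y_i : i ∈ V]`, modelled as `MvPolynomial (V ⊕ V) K`
with `x_i = X (Sum.inl i)` and `y_i = X (Sum.inr i)`. -/
def binomialEdgeIdeal (K : Type*) [Field K] {V : Type*} (G : SimpleGraph V) :
    Ideal (MvPolynomial (V ⊕ V) K) :=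
  Ideal.span { f | ∃ i j : V, G.Adj i j ∧
    f = X (Sum.inl i) * X (Sum.inr j) - X (Sum.inl j) * X (Sum.inr i) }

/-- The minimal number of generators of an ideal. -/
def mu {R : Type*} [CommRing R] (J : Ideal R) : ℕ :=
  sInf {k | ∃ s : Finset R, s.card = k ∧ Ideal.span (s : Set R) = J}

/-- The height of an ideal: the infimum of the heights of the primes containing it. -/
def htI {R : Type*} [CommRing R] (I : Ideal R) : ℕ∞ :=
  ⨅ (P : PrimeSpectrum R) (_ : I ≤ P.asIdeal), Order.height P

/-- An ideal is unmixed if all of its minimal primes have height equal to its height. -/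
def IsUnmixed {R : Type*} [CommRing R] (I : Ideal R) : Prop :=
  ∀ P ∈ I.minimalPrimes, htI P = htI I

/-- The depth of a ring `R` with respect to an ideal `m`: the supremum of the
lengths of regular sequences on `R` consisting of elements of `m`. -/
def ringDepth (R : Type*) [CommRing R] (m : Ideal R) : ℕ∞ :=
  sSup {d : ℕ∞ | ∃ l : List R, (l.length : ℕ∞) = d ∧ (∀ x ∈ l, x ∈ m) ∧
    RingTheory.Sequence.IsRegular R l}

/-- The graded maximal ideal of the quotient of a polynomial ring by an ideal `J`:
the image of the ideal generated by all the variables. -/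
def gradedMaxQuot {K σ : Type*} [Field K] (J : Ideal (MvPolynomial σ K)) :
    Ideal (MvPolynomial σ K ⧸ J) :=
  (Ideal.span (Set.range (X : σ → MvPolynomial σ K))).map (Ideal.Quotient.mk J)

/-- `S/J` is Cohen–Macaulay: its depth with respect to the graded maximal ideal
equals its Krull dimension. -/
def IsCMQuot {K σ : Type*} [Field K] (J : Ideal (MvPolynomial σ K)) : Prop :=
  (ringDepth (MvPolynomial σ K ⧸ J) (gradedMaxQuot J) : WithBot ℕ∞) =
    ringKrullDim (MvPolynomial σ K ⧸ J)

/-- A graph is a path graph if its vertices can be ordered `v_1, …, v_m` so that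
its edges are exactly `{v_i, v_{i+1}}` for `1 ≤ i ≤ m - 1`. -/
def IsPathGraph {V : Type*} (H : SimpleGraph V) : Prop :=
  ∃ (m : ℕ) (e : V ≃ Fin m), ∀ a b : V,
    H.Adj a b ↔ ((e a : ℕ) + 1 = (e b : ℕ) ∨ (e b : ℕ) + 1 = (e a : ℕ))

/-- The vertex set of a connected component, as a set of vertices. -/
def compSupp {V : Type*} (G : SimpleGraph V) (c : G.ConnectedComponent) : Set V :=
  {v | G.connectedComponentMk v = c}

end

noncomputable section

/-- The prime `P_T(G)` associated with a subset `T` of the vertices: it is generated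
by the variables `x_i, y_i` for `i ∈ T` together with the binomial edge ideals of the
complete graphs on the connected components of the subgraph of `G` induced on the
complement of `T` (i.e. all `2`-minors `x_i y_j - x_j y_i` for distinct vertices
`i, j ∉ T` lying in the same connected component of that induced subgraph). -/
def PTIdeal (K : Type*) [Field K] {n : ℕ} (G : SimpleGraph (Fin n)) (T : Set (Fin n)) :
    Ideal (MvPolynomial (Fin n ⊕ Fin n) K) :=
  Ideal.span
    ({ f | ∃ i ∈ T, f = X (Sum.inl i) } ∪ { f | ∃ i ∈ T, f = X (Sum.inr i) } ∪
      { f | ∃ (i j : Fin n) (hi : i ∈ Tᶜ) (hj : j ∈ Tᶜ), i ≠ j ∧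
        (G.induce Tᶜ).Reachable ⟨i, hi⟩ ⟨j, hj⟩ ∧
        f = X (Sum.inl i) * X (Sum.inr j) - X (Sum.inl j) * X (Sum.inr i) })

/-- The number of connected components of the subgraph of `G` induced on `U`. -/
def cNum {n : ℕ} (G : SimpleGraph (Fin n)) (U : Set (Fin n)) : ℕ :=
  Nat.card (G.induce U).ConnectedComponent

/-- `T` has the cutpoint property for `G`: every `i ∈ T` is a cutpoint of the
subgraph of `G` induced on `([n] ∖ T) ∪ {i}`, i.e. removing `i` from that graph
increases the number of connected components. -/
def HasCutpointProperty {n : ℕ} (G : SimpleGraph (Fin n)) (T : Set (Fin n)) : Prop :=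
  ∀ i ∈ T, cNum G (Tᶜ ∪ {i}) < cNum G Tᶜ

/-!
A point of the ambient space is a configuration of plane vectors `(x_i, y_i)`, one for each vertex,
and `J_G` says that adjacent vectors are parallel. At the generic point of a prime `P ⊇ J_G` let `T`
be the set of vertices whose vector vanishes. Being parallel is transitive among nonzero vectors,
so `P` contains the ideal `P_T` of the configurations that vanish on `T` and are parallel on each
connected component of `G ∖ T`. The parametrization `(x_i, y_i) = a_i • (s_ρ, t_ρ)`, with `ρ` the
component of `i`, shows that `P_T` is prime.

The height of `P_T` is `n + |T| - c(T)`: changing the parallelism classes one vertex at a time gives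
strict chains of such primes below and above `P_T`, possibly through one further prime at each
step, and their lengths add up to the dimension `2 n` of the polynomial ring.

Finally `P_S ≤ P_T` means that `S ⊆ T` and that no two components of `G ∖ T` are joined in `G ∖ S`.
So the minimal primes are the `P_T` for which putting back any vertex of `T` joins components. The
empty set is one of these `T`, and unmixedness says that all `P_T` have the height of `P_∅`.
-/

section OrderHeight

variable {α : Type*} [Preorder α]

lemma height_add_coheight_le_krullDim (a : α) :
    ((Order.height a + Order.coheight a : ℕ∞) : WithBot ℕ∞) ≤ Order.krullDim α := by
  have : Nonempty α := ⟨a⟩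
  rw [Order.krullDim_eq_iSup_height_add_coheight_of_nonempty, WithBot.coe_le_coe]
  exact le_iSup (fun a : α => Order.height a + Order.coheight a) a

lemma height_add_two_le {a b c : α} (hab : a < b) (hbc : b < c) :
    Order.height a + 2 ≤ Order.height c := by
  rw [← one_add_one_eq_two, ← add_assoc]
  exact (add_le_add_left (Order.height_add_one_le hab) 1).trans (Order.height_add_one_le hbc)

lemma coheight_add_two_le {a b c : α} (hab : a < b) (hbc : b < c) :
    Order.coheight c + 2 ≤ Order.coheight a :=
  height_add_two_le (α := αᵒᵈ) hbc hab

end OrderHeight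

section IdealHeight

variable {R : Type*} [CommRing R]

lemma htI_asIdeal (P : PrimeSpectrum R) : htI P.asIdeal = Order.height P :=
  le_antisymm (iInf₂_le P le_rfl) (le_iInf₂ fun _ h => Order.height_mono h)

lemma htI_mono {I J : Ideal R} (h : I ≤ J) : htI I ≤ htI J :=
  le_iInf₂ fun Q hQ => iInf₂_le Q (h.trans hQ)

lemma isUnmixed_iff_of_mem_minimalPrimes {I P₀ : Ideal R} (h₀ : P₀ ∈ I.minimalPrimes) :
    IsUnmixed I ↔ ∀ P ∈ I.minimalPrimes, htI P = htI P₀ := by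
  refine ⟨fun h P hP => (h P hP).trans (h P₀ h₀).symm, fun h P hP => ?_⟩
  refine le_antisymm (le_iInf₂ fun Q hQ => ?_) (htI_mono hP.1.2)
  obtain ⟨P', hP', hP'Q⟩ := Ideal.exists_minimalPrimes_le hQ
  calc htI P = htI P' := (h P hP).trans (h P' hP').symm
    _ ≤ Order.height Q := iInf₂_le Q hP'Q

end IdealHeight

section Coloring

variable (K : Type*) [Field K] {V ι κ : Type*}

/-- The `2`-minor `x_i y_j - x_j y_i`, the generator of the binomial edge ideal attached to an
edge `{i, j}`. -/
def edgeBinomial (i j : V) : MvPolynomial (V ⊕ V) K :=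
  X (Sum.inl i) * X (Sum.inr j) - X (Sum.inl j) * X (Sum.inr i)

/-- The generic configuration of plane vectors `(x_i, y_i)` in which vectors of equal color are
parallel and uncolored vectors vanish: `(x_i, y_i) = a_i • (s_ρ, t_ρ)` if `i` has the color `ρ`.
The partial coloring is encoded by the value `none` at uncolored vertices, and `a_i`, `s_ρ`, `t_ρ`
are the variables `Sum.inl i`, `Sum.inr (Sum.inl ρ)`, `Sum.inr (Sum.inr ρ)`. -/
def coloringPoint (c : V → Option ι) : V ⊕ V → MvPolynomial (V ⊕ (ι ⊕ ι)) K
  | Sum.inl i => (c i).elim 0 fun ρ => X (Sum.inl i) * X (Sum.inr (Sum.inl ρ))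
  | Sum.inr i => (c i).elim 0 fun ρ => X (Sum.inl i) * X (Sum.inr (Sum.inr ρ))

/-- The prime ideal of all polynomials vanishing at the generic configuration of a partial
coloring. The ideals `P_T(G)` arise by coloring the vertices outside `T` by their components. -/
def coloringPrime (c : V → Option ι) : PrimeSpectrum (MvPolynomial (V ⊕ V) K) :=
  ⟨RingHom.ker (aeval (R := K) (coloringPoint K c)), RingHom.ker_isPrime _⟩

variable {K} {c : V → Option ι} {c' : V → Option κ} {i j k : V} {ρ : ι}

section EdgeBinomial

variable {I P : Ideal (MvPolynomial (V ⊕ V) K)}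

lemma edgeBinomial_mem_of_X_mem_left (hx : X (Sum.inl i) ∈ I) (hy : X (Sum.inr i) ∈ I) :
    edgeBinomial K i j ∈ I :=
  I.sub_mem (I.mul_mem_right _ hx) (I.mul_mem_left _ hy)

lemma edgeBinomial_mem_of_X_mem_right (hx : X (Sum.inl j) ∈ I) (hy : X (Sum.inr j) ∈ I) :
    edgeBinomial K i j ∈ I :=
  I.sub_mem (I.mul_mem_left _ hy) (I.mul_mem_right _ hx)

lemma edgeBinomial_mem_trans [hP : P.IsPrime]
    (hj : ¬(X (Sum.inl j) ∈ P ∧ X (Sum.inr j) ∈ P)) (hij : edgeBinomial K i j ∈ P)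
    (hjk : edgeBinomial K j k ∈ P) : edgeBinomial K i k ∈ P := by
  have hx : X (Sum.inl j) * edgeBinomial K i k ∈ P := by
    have h : X (Sum.inl j) * edgeBinomial K i k =
        X (Sum.inl i) * edgeBinomial K j k + X (Sum.inl k) * edgeBinomial K i j := by
      simp only [edgeBinomial]; ring
    exact h ▸ P.add_mem (P.mul_mem_left _ hjk) (P.mul_mem_left _ hij)
  have hy : X (Sum.inr j) * edgeBinomial K i k ∈ P := by
    have h : X (Sum.inr j) * edgeBinomial K i k =
        X (Sum.inr k) * edgeBinomial K i j + X (Sum.inr i) * edgeBinomial K j k := by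
      simp only [edgeBinomial]; ring
    exact h ▸ P.add_mem (P.mul_mem_left _ hij) (P.mul_mem_left _ hjk)
  by_contra hik
  exact hj ⟨(hP.mem_or_mem hx).resolve_right hik, (hP.mem_or_mem hy).resolve_right hik⟩

end EdgeBinomial

section Membership

lemma mem_coloringPrime {f : MvPolynomial (V ⊕ V) K} :
    f ∈ (coloringPrime K c).asIdeal ↔ aeval (coloringPoint K c) f = 0 :=
  Iff.rfl

lemma X_inl_mem_coloringPrime_iff :
    (X (Sum.inl i) : MvPolynomial (V ⊕ V) K) ∈ (coloringPrime K c).asIdeal ↔ c i = none := by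
  rw [mem_coloringPrime, aeval_X]
  cases h : c i <;> simp [coloringPoint, h]

lemma X_inr_mem_coloringPrime_iff :
    (X (Sum.inr i) : MvPolynomial (V ⊕ V) K) ∈ (coloringPrime K c).asIdeal ↔ c i = none := by
  rw [mem_coloringPrime, aeval_X]
  cases h : c i <;> simp [coloringPoint, h]

lemma aeval_coloringPoint_edgeBinomial {σ : ι} (hi : c i = some ρ) (hj : c j = some σ) :
    aeval (coloringPoint K c) (edgeBinomial K i j) =
      X (Sum.inl i) * X (Sum.inl j) *
        (X (Sum.inr (Sum.inl ρ)) * X (Sum.inr (Sum.inr σ)) -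
          X (Sum.inr (Sum.inl σ)) * X (Sum.inr (Sum.inr ρ))) := by
  simp only [edgeBinomial, map_sub, map_mul, aeval_X, coloringPoint, hi, hj, Option.elim_some]
  ring

lemma edgeBinomial_mem_coloringPrime_iff :
    edgeBinomial K i j ∈ (coloringPrime K c).asIdeal ↔ c i = c j ∨ c i = none ∨ c j = none := by
  classical
  rcases hi : c i with _ | ρ
  · simpa using edgeBinomial_mem_of_X_mem_left (X_inl_mem_coloringPrime_iff.2 hi)
      (X_inr_mem_coloringPrime_iff.2 hi)
  rcases hj : c j with _ | σ
  · simpa using edgeBinomial_mem_of_X_mem_right (X_inl_mem_coloringPrime_iff.2 hj)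
      (X_inr_mem_coloringPrime_iff.2 hj)
  rw [mem_coloringPrime, aeval_coloringPoint_edgeBinomial hi hj]
  refine ⟨fun h => ?_, fun h => ?_⟩
  · by_contra! hne
    have hρσ : ρ ≠ σ := fun h => hne.1 (congrArg some h)
    have heval := congrArg (aeval (R := K) (Sum.elim (fun _ => (1 : K))
      (Sum.elim (Pi.single ρ 1) (Pi.single σ 1)))) h
    simp [hρσ] at heval
  · obtain rfl : ρ = σ := by simpa using h
    ring

end Membership

section Comparison

lemma exists_common_direction {F α : Type*} [Field F] (x y : α → F)
    (h : ∀ i j, x i * y j = x j * y i) :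
    ∃ s t : F, ∀ i, ∃ a, x i = a * s ∧ y i = a * t := by
  by_cases h₀ : ∀ j, x j = 0 ∧ y j = 0
  · exact ⟨0, 0, fun i => ⟨0, by simp [h₀ i]⟩⟩
  push Not at h₀
  obtain ⟨j, hj⟩ := h₀
  refine ⟨x j, y j, fun i => ?_⟩
  by_cases hx : x j = 0
  · exact ⟨y i / y j, by grind⟩
  · exact ⟨x i / x j, by grind⟩

lemma exists_comp_aeval_coloringPoint_eq {F : Type*} [Field F] [Algebra K F]
    (φ : MvPolynomial (V ⊕ V) K →ₐ[K] F)
    (hnone : ∀ i, c i = none → φ (X (Sum.inl i)) = 0 ∧ φ (X (Sum.inr i)) = 0)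
    (hsome : ∀ i j ρ, c i = some ρ → c j = some ρ → φ (edgeBinomial K i j) = 0) :
    ∃ ψ : MvPolynomial (V ⊕ (ι ⊕ ι)) K →ₐ[K] F, ψ.comp (aeval (coloringPoint K c)) = φ := by
  have hdirection : ∀ ρ, ∃ s t : F, ∀ i : {i // c i = some ρ}, ∃ a,
      φ (X (Sum.inl i.1)) = a * s ∧ φ (X (Sum.inr i.1)) = a * t := fun ρ =>
    exists_common_direction _ _ fun i j => by
      simpa [edgeBinomial, sub_eq_zero] using hsome i j ρ i.2 j.2
  choose s t hst using hdirection
  have hscalar : ∀ i, ∃ a : F, ∀ ρ, c i = some ρ →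
      φ (X (Sum.inl i)) = a * s ρ ∧ φ (X (Sum.inr i)) = a * t ρ := fun i => by
    rcases hi : c i with _ | ρ
    · simp
    · obtain ⟨a, ha⟩ := hst ρ ⟨i, hi⟩
      exact ⟨a, by rintro _ ⟨⟩; exact ha⟩
  choose a ha using hscalar
  refine ⟨aeval (Sum.elim a (Sum.elim s t)), algHom_ext fun p => ?_⟩
  rcases p with i | i <;> rcases hi : c i with _ | ρ
  · simp [coloringPoint, hi, hnone i hi]
  · simp [coloringPoint, hi, ha i ρ hi]
  · simp [coloringPoint, hi, hnone i hi]
  · simp [coloringPoint, hi, ha i ρ hi]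

lemma coloringPrime_le {P : PrimeSpectrum (MvPolynomial (V ⊕ V) K)}
    (hnone : ∀ i, c i = none → X (Sum.inl i) ∈ P.asIdeal ∧ X (Sum.inr i) ∈ P.asIdeal)
    (hsome : ∀ i j ρ, c i = some ρ → c j = some ρ → edgeBinomial K i j ∈ P.asIdeal) :
    coloringPrime K c ≤ P := by
  let φ := IsScalarTower.toAlgHom K (MvPolynomial (V ⊕ V) K) P.asIdeal.ResidueField
  have hφ : ∀ f, φ f = 0 ↔ f ∈ P.asIdeal := fun _ => Ideal.algebraMap_residueField_eq_zero
  obtain ⟨ψ, hψ⟩ := exists_comp_aeval_coloringPoint_eq (c := c) φ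
    (fun i hi => ⟨(hφ _).2 (hnone i hi).1, (hφ _).2 (hnone i hi).2⟩)
    (fun i j ρ hi hj => (hφ _).2 (hsome i j ρ hi hj))
  intro f (hf : aeval (coloringPoint K c) f = 0)
  rw [← hφ, ← hψ, AlgHom.comp_apply, hf, map_zero]

lemma coloringPrime_le_coloringPrime_iff : coloringPrime K c ≤ coloringPrime K c' ↔
    (∀ i, c i = none → c' i = none) ∧
      ∀ i j ρ, c i = some ρ → c j = some ρ → c' i = c' j ∨ c' i = none ∨ c' j = none := by
  constructor
  · refine fun h => ⟨fun i hi => ?_, fun i j ρ hi hj => ?_⟩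
    · exact X_inl_mem_coloringPrime_iff.1 (h (X_inl_mem_coloringPrime_iff (K := K).2 hi))
    · have hmem := edgeBinomial_mem_coloringPrime_iff (K := K).2 (Or.inl (hi.trans hj.symm))
      exact edgeBinomial_mem_coloringPrime_iff.1 (h hmem)
  · rintro ⟨hnone, hsome⟩
    refine coloringPrime_le (fun i hi => ?_) fun i j ρ hi hj => ?_
    · exact ⟨X_inl_mem_coloringPrime_iff.2 (hnone i hi), X_inr_mem_coloringPrime_iff.2 (hnone i hi)⟩
    · exact edgeBinomial_mem_coloringPrime_iff.2 (hsome i j ρ hi hj)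

lemma coloringPrime_map {f : ι → κ} (hf : Function.Injective f) :
    coloringPrime K (fun i => (c i).map f) = coloringPrime K c := by
  apply le_antisymm <;> rw [coloringPrime_le_coloringPrime_iff]
  · refine ⟨by simp, fun i j ρ hi hj => Or.inl (Option.map_injective hf (hi.trans hj.symm))⟩
  · exact ⟨by simp, fun i j ρ hi hj => by simp [hi, hj]⟩

end Comparison

section Recoloring

variable [DecidableEq V]

lemma coloringPrime_lt_update_none (hi : c i ≠ none) :
    coloringPrime K c < coloringPrime K (Function.update c i none) := by
  rw [lt_iff_le_not_ge, coloringPrime_le_coloringPrime_iff, coloringPrime_le_coloringPrime_iff]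
  refine ⟨⟨fun k hk => ?_, fun j k ρ hj hk => ?_⟩, fun h => hi (h.1 i (by simp))⟩ <;>
    grind [Function.update_apply]

/-- The intermediate prime adjoins `x_i` alone. -/
lemma exists_lt_coloringPrime_update_none (hi : c i = some ρ) (hρ : ∀ j ≠ i, c j ≠ some ρ) :
    ∃ Q, coloringPrime K c < Q ∧ Q < coloringPrime K (Function.update c i none) := by
  classical
  let z : V ⊕ V → MvPolynomial (V ⊕ (ι ⊕ ι)) K :=
    Function.update (coloringPoint K c) (Sum.inl i) 0
  let Q : PrimeSpectrum (MvPolynomial (V ⊕ V) K) :=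
    ⟨RingHom.ker (aeval (R := K) z), RingHom.ker_isPrime _⟩
  have hQ : ∀ f, f ∈ Q.asIdeal ↔ aeval z f = 0 := fun _ => Iff.rfl
  refine ⟨Q, lt_of_le_not_ge (coloringPrime_le (fun j hj => ?_) fun j k σ hj hk => ?_) fun h => ?_,
    lt_of_le_not_ge ?_ fun h => ?_⟩
  · have hji : j ≠ i := by rintro rfl; simp [hi] at hj
    simp [hQ, z, coloringPoint, hj, hji]
  · rcases eq_or_ne j i with rfl | hji
    · obtain rfl : k = j := by grind
      simp [hQ, edgeBinomial]
    · have hki : k ≠ i := by grind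
      simp only [hQ, z, edgeBinomial, map_sub, map_mul, aeval_X, ne_eq, Sum.inl.injEq, hji, hki,
        not_false_eq_true, reduceCtorEq, Function.update_of_ne, coloringPoint, hj, hk,
        Option.elim_some]
      ring
  · have hx := X_inl_mem_coloringPrime_iff.1 (h ((hQ (X (Sum.inl i))).2 (by simp [z])))
    simp [hi] at hx
  · have hfactor : aeval (coloringPoint K (Function.update c i none)) =
        (aeval (R := K) (Function.update X (Sum.inl i) 0)).comp (aeval z) := by
      refine algHom_ext fun p => ?_
      rcases p with j | j <;> rcases eq_or_ne j i with rfl | hji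
      · simp [z, coloringPoint]
      · cases hj : c j <;> simp [z, coloringPoint, hj, hji]
      · simp [z, coloringPoint, hi]
      · cases hj : c j <;> simp [z, coloringPoint, hj, hji]
    intro f hf
    rw [mem_coloringPrime, hfactor, AlgHom.comp_apply, (hQ f).1 hf, map_zero]
  · have hy := (hQ _).1 (h (X_inr_mem_coloringPrime_iff.2 (Function.update_self i none c)))
    simp [z, coloringPoint, hi] at hy

lemma coloringPrime_update_some_lt (hij : j ≠ i) (hi : c i ≠ none) (hj : c j = c i)
    (hρ : ∀ k, c k ≠ some ρ) :
    coloringPrime K (Function.update c i (some ρ)) < coloringPrime K c := by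
  rw [lt_iff_le_not_ge, coloringPrime_le_coloringPrime_iff, coloringPrime_le_coloringPrime_iff]
  obtain ⟨σ, hσ⟩ := Option.ne_none_iff_exists'.1 hi
  refine ⟨⟨fun k hk => ?_, fun k l τ hk hl => ?_⟩, fun h => ?_⟩
  · grind [Function.update_apply]
  · grind [Function.update_apply]
  · have := h.2 i j σ hσ (hj.trans hσ)
    grind [Function.update_apply]

end Recoloring

section Dimension

/-- The number of parameters `a_i` plus the number of directions `(s_ρ, t_ρ)` up to scaling that
occur in the generic configuration of a partial coloring: the dimension of the variety of
`coloringPrime`. -/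
def coloringDim (c : V → Option ι) : ℕ :=
  {i | c i ≠ none}.ncard + {ρ | ∃ i, c i = some ρ}.ncard

lemma coloringDim_map {f : ι → κ} (hf : Function.Injective f) :
    coloringDim (fun i => (c i).map f) = coloringDim c := by
  have hcolors : {ρ | ∃ i, (c i).map f = some ρ} = f '' {ρ | ∃ i, c i = some ρ} := by
    ext; simp only [Option.map_eq_some_iff, Set.mem_image, Set.mem_ofPred_eq]; grind
  rw [coloringDim, coloringDim, hcolors, Set.ncard_image_of_injective _ hf]
  simp

lemma coloringDim_eq_two_mul_card (hc : ∀ i, c i ≠ none) (hinj : Function.Injective c) :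
    coloringDim c = 2 * Nat.card V := by
  have hcolors : some '' {ρ | ∃ i, c i = some ρ} = Set.range c := by
    ext o
    cases o <;> simp [hc]
  rw [coloringDim, ← Set.ncard_image_of_injective _ (Option.some_injective ι), hcolors,
    Set.ncard_range_of_injective hinj]
  simp [hc, two_mul, Set.ncard_univ]

variable [Finite V]

lemma finite_setOf_color : {ρ | ∃ i, c i = some ρ}.Finite :=
  Set.Finite.preimage (s := Set.range c) (Option.some_injective ι).injOn (Set.finite_range c)

lemma coloringDim_le_two_mul_card (c : V → Option ι) : coloringDim c ≤ 2 * Nat.card V := by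
  have hcolors : some '' {ρ | ∃ i, c i = some ρ} ⊆ Set.range c := by
    rintro _ ⟨ρ, hρ, rfl⟩
    exact hρ
  have hcard : {ρ | ∃ i, c i = some ρ}.ncard ≤ Nat.card V :=
    calc {ρ | ∃ i, c i = some ρ}.ncard = (some '' {ρ | ∃ i, c i = some ρ}).ncard :=
          (Set.ncard_image_of_injective _ (Option.some_injective ι)).symm
      _ ≤ (Set.range c).ncard := Set.ncard_le_ncard hcolors
      _ ≤ Nat.card V := Finite.card_range_le c
  rw [two_mul]
  exact add_le_add (Set.ncard_le_card _) hcard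

variable [DecidableEq V]

lemma ncard_setOf_update_none_ne_none_add_one (hi : c i ≠ none) :
    {j | Function.update c i none j ≠ none}.ncard + 1 = {j | c j ≠ none}.ncard := by
  have h : {j | Function.update c i none j ≠ none} = {j | c j ≠ none} \ {i} := by
    ext j; simp only [Function.update_apply]; grind
  rw [h, Set.ncard_sdiff_singleton_add_one hi]

lemma coloringDim_update_none_add_one (hij : j ≠ i) (hi : c i ≠ none) (hj : c j = c i) :
    coloringDim (Function.update c i none) + 1 = coloringDim c := by
  have h : {ρ | ∃ k, Function.update c i none k = some ρ} = {ρ | ∃ k, c k = some ρ} := by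
    ext ρ; simp only [Function.update_apply]; grind
  rw [coloringDim, coloringDim, h, ← ncard_setOf_update_none_ne_none_add_one hi]
  ring

lemma coloringDim_update_none_add_two (hi : c i = some ρ) (hρ : ∀ j ≠ i, c j ≠ some ρ) :
    coloringDim (Function.update c i none) + 2 = coloringDim c := by
  have h : {σ | ∃ k, Function.update c i none k = some σ} = {σ | ∃ k, c k = some σ} \ {ρ} := by
    ext σ; simp only [Function.update_apply]; grind
  have hne : c i ≠ none := by simp [hi]
  have hmem : ρ ∈ {σ | ∃ k, c k = some σ} := ⟨i, hi⟩
  rw [coloringDim, coloringDim, h, ← ncard_setOf_update_none_ne_none_add_one hne,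
    ← Set.ncard_sdiff_singleton_add_one hmem finite_setOf_color]
  ring

end Dimension

section Height

variable [Finite V]

lemma coloringDim_le_coheight_coloringPrime :
    (coloringDim c : ℕ∞) ≤ Order.coheight (coloringPrime K c) := by
  classical
  induction h : coloringDim c using Nat.strong_induction_on generalizing c with
  | h d ih =>
    subst h
    by_cases hnone : ∀ i, c i = none
    · simp [coloringDim, hnone]
    push Not at hnone
    obtain ⟨i, hi⟩ := hnone
    obtain ⟨ρ, hρ⟩ := Option.ne_none_iff_exists'.1 hi
    by_cases hlone : ∀ j ≠ i, c j ≠ some ρ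
    · obtain ⟨Q, hcQ, hQ⟩ := exists_lt_coloringPrime_update_none (K := K) hρ hlone
      have hdim := coloringDim_update_none_add_two hρ hlone
      rw [← hdim]
      exact (add_le_add_left (ih _ (by lia) rfl) 2).trans (coheight_add_two_le hcQ hQ)
    · push Not at hlone
      obtain ⟨j, hji, hj⟩ := hlone
      have hdim := coloringDim_update_none_add_one hji hi (hj.trans hρ.symm)
      rw [← hdim]
      exact (add_le_add_left (ih _ (by lia) rfl) 1).trans
        (Order.coheight_add_one_le (coloringPrime_lt_update_none hi))

lemma height_add_coheight_le_two_mul_card (P : PrimeSpectrum (MvPolynomial (V ⊕ V) K)) :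
    Order.height P + Order.coheight P ≤ (2 * Nat.card V : ℕ) := by
  have hdim : Order.krullDim (PrimeSpectrum (MvPolynomial (V ⊕ V) K)) =
      (((2 * Nat.card V : ℕ) : ℕ∞) : WithBot ℕ∞) := by
    have h := ringKrullDim_of_isNoetherianRing (R := K) (ι := V ⊕ V)
    rwa [ringKrullDim_eq_zero_of_field, zero_add, Nat.card_sum, ← two_mul] at h
  exact WithBot.coe_le_coe.1 (hdim ▸ height_add_coheight_le_krullDim P)

/-- A vertex that is uncolored, or shares its color with another vertex, gets a fresh color. -/
lemma exists_recoloring [Infinite ι] (hc : coloringDim c < 2 * Nat.card V) :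
    ∃ e : V → Option ι, ∃ k > 0, coloringDim e = coloringDim c + k ∧
      Order.height (coloringPrime K e) + k ≤ Order.height (coloringPrime K c) := by
  classical
  obtain ⟨ρ, hρ⟩ := (finite_setOf_color (c := c)).exists_notMem
  replace hρ : ∀ i, c i ≠ some ρ := by simpa using hρ
  have hself (i : V) : Function.update c i (some ρ) i = some ρ := Function.update_self ..
  have hlone (i : V) : ∀ j ≠ i, Function.update c i (some ρ) j ≠ some ρ := fun j hj => by
    simpa [hj] using hρ j
  have hdim (i : V) := coloringDim_update_none_add_two (hself i) (hlone i)
  simp only [Function.update_idem] at hdim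
  by_cases hnone : ∃ i, c i = none
  · obtain ⟨i, hi⟩ := hnone
    have hupdate : Function.update c i none = c := by rw [← hi, Function.update_eq_self]
    obtain ⟨Q, heQ, hQc⟩ := exists_lt_coloringPrime_update_none (K := K) (hself i) (hlone i)
    rw [Function.update_idem, hupdate] at hQc
    exact ⟨_, 2, by simp, by rw [← hdim i, hupdate], height_add_two_le heQ hQc⟩
  · push Not at hnone
    have hinj : ¬Function.Injective c := fun h =>
      hc.ne (coloringDim_eq_two_mul_card hnone h)
    obtain ⟨i, j, hij, hne⟩ := Function.not_injective_iff.1 hinj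
    have hdim' := coloringDim_update_none_add_one hne.symm (hnone i) hij.symm
    exact ⟨_, 1, by simp, by rw [← hdim i, ← hdim'],
      Order.height_add_one_le (coloringPrime_update_some_lt hne.symm (hnone i) hij.symm hρ)⟩

lemma two_mul_card_le_height_coloringPrime_add [Infinite ι] (c : V → Option ι) :
    ((2 * Nat.card V : ℕ) : ℕ∞) ≤ Order.height (coloringPrime K c) + coloringDim c := by
  classical
  induction h : 2 * Nat.card V - coloringDim c using Nat.strong_induction_on generalizing c with
  | h m ih =>
    obtain hc | hc := (coloringDim_le_two_mul_card c).eq_or_lt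
    · rw [hc]
      exact le_add_self
    · obtain ⟨e, k, hk, hdim, hheight⟩ := exists_recoloring (K := K) hc
      have hle := coloringDim_le_two_mul_card e
      calc ((2 * Nat.card V : ℕ) : ℕ∞) ≤ Order.height (coloringPrime K e) + coloringDim e :=
            ih _ (by lia) e rfl
        _ = Order.height (coloringPrime K e) + k + coloringDim c := by
            rw [hdim]; push_cast; ring
        _ ≤ Order.height (coloringPrime K c) + coloringDim c := by gcongr

theorem height_coloringPrime_add_coloringDim (c : V → Option ι) :
    Order.height (coloringPrime K c) + coloringDim c = (2 * Nat.card V : ℕ) := by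
  refine le_antisymm ?_ ?_
  · exact (add_le_add_right coloringDim_le_coheight_coloringPrime _).trans
      (height_add_coheight_le_two_mul_card _)
  · -- Enlarging the color type makes fresh colors available.
    have hinl : Function.Injective (Sum.inl : ι → ι ⊕ ℕ) := Sum.inl_injective
    simpa only [coloringPrime_map hinl, coloringDim_map hinl] using
      two_mul_card_le_height_coloringPrime_add (K := K) fun i => (c i).map (Sum.inl : ι → ι ⊕ ℕ)

end Height

end Coloring

section ComponentCompl

open SimpleGraph

variable {V : Type*} {G : SimpleGraph V} {S T : Set V} {v : V}

lemma card_connectedComponent_eq_one (h : G.Connected) : Nat.card G.ConnectedComponent = 1 := by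
  have := h.preconnected.subsingleton_connectedComponent
  have := h.nonempty
  exact Nat.card_unique

lemma card_componentCompl_empty (G : SimpleGraph V) :
    Nat.card (G.ComponentCompl ∅) = Nat.card G.ConnectedComponent := by
  rw [ComponentCompl, Set.compl_empty]
  exact Nat.card_congr (induceUnivIso G).connectedComponentEquiv

lemma coe_hom_sdiff_singleton_of_notMem {C : G.ComponentCompl T}
    (hv : v ∉ C.hom (Set.sdiff_subset (t := {v}))) :
    (C.hom (Set.sdiff_subset (t := {v})) : Set V) = C := by
  refine (subset_antisymm (C.subset_hom _) fun y hy => ?_).symm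
  obtain ⟨x, hx⟩ := C.nonempty
  obtain ⟨hxT, hxC⟩ := C.subset_hom (Set.sdiff_subset (t := {v})) hx
  obtain ⟨hyT, hyC⟩ := hy
  obtain ⟨p⟩ := ConnectedComponent.exact (hxC.trans hyC.symm)
  by_contra hyC
  obtain ⟨⟨⟨a, b⟩, hab⟩, -, ha, hb⟩ := p.exists_boundary_dart {z | z.1 ∈ C} hx hyC
  have hbv : b.1 ≠ v := fun h => by
    have hb := ComponentCompl.mem_of_adj a.1 b.1 (C.subset_hom Set.sdiff_subset ha) b.2 hab
    rw [h] at hb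
    exact hv hb
  exact hb (ComponentCompl.mem_of_adj a.1 b.1 ha (fun hbT => b.2 ⟨hbT, hbv⟩) hab)

lemma surjective_hom_sdiff_singleton_of_not_injective
    (h : ¬Function.Injective (ComponentCompl.hom (G := G) (Set.sdiff_subset (s := T) (t := {v})))) :
    Function.Surjective (ComponentCompl.hom (G := G) (Set.sdiff_subset (s := T) (t := {v}))) := by
  obtain ⟨C, C', hCC', hne⟩ := Function.not_injective_iff.1 h
  have hv : v ∈ C.hom (Set.sdiff_subset (t := {v})) := by
    by_contra hv
    refine hne (ComponentCompl.coe_inj.1 ?_)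
    rw [← coe_hom_sdiff_singleton_of_notMem hv, hCC',
      coe_hom_sdiff_singleton_of_notMem (hCC' ▸ hv)]
  refine ComponentCompl.ind fun w hw => ?_
  rcases eq_or_ne w v with rfl | hwv
  · obtain ⟨_, hC⟩ := hv
    exact ⟨C, hC.symm⟩
  · exact ⟨G.componentComplMk fun hwT => hw ⟨hwT, hwv⟩, rfl⟩

lemma card_componentCompl_sdiff_singleton_lt_iff [Finite V] :
    Nat.card (G.ComponentCompl (T \ {v})) < Nat.card (G.ComponentCompl T) ↔
      ¬Function.Injective
        (ComponentCompl.hom (G := G) (Set.sdiff_subset (s := T) (t := {v}))) := by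
  refine ⟨fun h hinj => h.not_ge (Nat.card_le_card_of_injective _ hinj), fun hinj => ?_⟩
  have hsurj := surjective_hom_sdiff_singleton_of_not_injective hinj
  refine (Nat.card_le_card_of_surjective _ hsurj).lt_of_ne fun hcard => hinj ?_
  exact ((Nat.bijective_iff_surjective_and_card _).2 ⟨hsurj, hcard.symm⟩).1

/-- The cutpoint property of `HasCutpointProperty` over an arbitrary vertex type: putting any
vertex of `T` back merges components of the complement of `T`. -/
def IsCutset (G : SimpleGraph V) (T : Set V) : Prop :=
  ∀ v ∈ T, Nat.card (G.ComponentCompl (T \ {v})) < Nat.card (G.ComponentCompl T)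

lemma isCutset_empty : IsCutset G ∅ := by
  simp [IsCutset]

lemma hasCutpointProperty_iff_isCutset {n : ℕ} {G : SimpleGraph (Fin n)} {T : Set (Fin n)} :
    HasCutpointProperty G T ↔ IsCutset G T := by
  refine forall₂_congr fun v _ => ?_
  rw [cNum, cNum, ComponentCompl, ComponentCompl, Set.compl_sdiff, Set.union_comm]

end ComponentCompl

section CutPrime

open SimpleGraph

variable (K : Type*) [Field K] {V : Type*} (G : SimpleGraph V) (S T : Set V)

open Classical in
/-- The coloring of the vertices outside `T` by their component in the complement of `T`. -/
def componentColoring (i : V) : Option (G.ComponentCompl T) :=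
  if h : i ∉ T then some (G.componentComplMk h) else none

/-- The prime `P_T(G)`, as the vanishing ideal of its generic configuration: the vectors
`(x_i, y_i)` vanish on `T` and are parallel on each component of the complement of `T`. -/
def cutPrime : PrimeSpectrum (MvPolynomial (V ⊕ V) K) :=
  coloringPrime K (componentColoring G T)

variable {K G S T} {i j : V}

@[simp]
lemma componentColoring_eq_none_iff : componentColoring G T i = none ↔ i ∈ T := by
  simp [componentColoring]

lemma componentColoring_of_notMem (h : i ∉ T) :
    componentColoring G T i = some (G.componentComplMk h) :=
  dif_pos h

lemma componentColoring_eq_some_iff {C : G.ComponentCompl T} :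
    componentColoring G T i = some C ↔ i ∈ C := by
  by_cases h : i ∈ T <;> simp [componentColoring, h]

lemma coloringDim_componentColoring :
    coloringDim (componentColoring G T) = Tᶜ.ncard + Nat.card (G.ComponentCompl T) := by
  have hvertices : {i | componentColoring G T i ≠ none} = Tᶜ := by
    ext; simp
  have hcolors : {C | ∃ i, componentColoring G T i = some C} = Set.univ :=
    Set.eq_univ_of_forall fun C =>
      C.nonempty.imp fun _ hi => componentColoring_eq_some_iff.2 hi
  rw [coloringDim, hvertices, hcolors, Set.ncard_univ]

theorem exists_height_cutPrime_eq [Finite V] :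
    ∃ h : ℕ, Order.height (cutPrime K G T) = h ∧
      h + Nat.card (G.ComponentCompl T) = Nat.card V + T.ncard := by
  have h := height_coloringPrime_add_coloringDim (K := K) (componentColoring G T)
  rw [coloringDim_componentColoring, ← cutPrime] at h
  have hfinite : Order.height (cutPrime K G T) ≠ ⊤ :=
    ne_top_of_le_ne_top (ENat.natCast_ne_top _) (le_self_add.trans h.le)
  have hT := Set.ncard_add_ncard_compl T
  lift Order.height (cutPrime K G T) to ℕ using hfinite with m
  norm_cast at h
  exact ⟨m, rfl, by lia⟩

lemma height_cutPrime_eq_height_cutPrime_iff [Finite V] :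
    Order.height (cutPrime K G S) = Order.height (cutPrime K G T) ↔
      Nat.card (G.ComponentCompl S) + T.ncard = Nat.card (G.ComponentCompl T) + S.ncard := by
  obtain ⟨a, hS, hSa⟩ := exists_height_cutPrime_eq (K := K) (G := G) (T := S)
  obtain ⟨b, hT, hTb⟩ := exists_height_cutPrime_eq (K := K) (G := G) (T := T)
  rw [hS, hT, Nat.cast_inj]
  lia

theorem cutPrime_le_cutPrime_iff : cutPrime K G S ≤ cutPrime K G T ↔
    ∃ h : S ⊆ T, Function.Injective (ComponentCompl.hom (G := G) h) := by
  rw [cutPrime, cutPrime, coloringPrime_le_coloringPrime_iff]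
  simp only [componentColoring_eq_none_iff, componentColoring_eq_some_iff, ← exists_prop]
  refine exists_congr fun hST => ⟨fun h => ?_, fun h i j C hi hj => ?_⟩
  · refine ComponentCompl.ind fun i hi => ComponentCompl.ind fun j hj hij => ?_
    have hcolor := h i j _ (G.componentComplMk_mem_hom hi hST)
      (hij ▸ G.componentComplMk_mem_hom hj hST)
    simpa [hi, hj, componentColoring_of_notMem] using hcolor
  · by_cases hiT : i ∈ T
    · exact Or.inr (Or.inl hiT)
    by_cases hjT : j ∈ T
    · exact Or.inr (Or.inr hjT)
    obtain ⟨_, hi⟩ := hi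
    obtain ⟨_, hj⟩ := hj
    rw [componentColoring_of_notMem hiT, componentColoring_of_notMem hjT]
    exact Or.inl (congrArg some (h (hi.trans hj.symm)))

lemma isCutset_iff_forall_cutPrime_le [Finite V] :
    IsCutset G T ↔ ∀ S, cutPrime K G S ≤ cutPrime K G T → S = T := by
  refine ⟨fun hT S hle => ?_, fun h v hv => ?_⟩
  · obtain ⟨hST, hinj⟩ := cutPrime_le_cutPrime_iff.1 hle
    by_contra hne
    obtain ⟨v, hvT, hvS⟩ := Set.exists_of_ssubset (hST.ssubset_of_ne hne)
    have hS : S ⊆ T \ {v} := Set.subset_sdiff_singleton hST hvS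
    refine card_componentCompl_sdiff_singleton_lt_iff.1 (hT v hvT) fun C C' hCC' => hinj ?_
    rw [ComponentCompl.hom_trans C Set.sdiff_subset hS, hCC', ← ComponentCompl.hom_trans]
  · rw [card_componentCompl_sdiff_singleton_lt_iff]
    intro hinj
    have hT : T \ {v} = T := h _ (cutPrime_le_cutPrime_iff.2 ⟨Set.sdiff_subset, hinj⟩)
    exact (hT.symm ▸ hv : v ∈ T \ {v}).2 rfl

variable {P : PrimeSpectrum (MvPolynomial (V ⊕ V) K)}

lemma binomialEdgeIdeal_le_cutPrime : binomialEdgeIdeal K G ≤ (cutPrime K G T).asIdeal := by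
  rw [binomialEdgeIdeal, Ideal.span_le]
  rintro _ ⟨i, j, hij, rfl⟩
  refine edgeBinomial_mem_coloringPrime_iff.2 ?_
  simp only [componentColoring_eq_none_iff]
  by_cases hi : i ∈ T
  · exact Or.inr (Or.inl hi)
  by_cases hj : j ∈ T
  · exact Or.inr (Or.inr hj)
  rw [componentColoring_of_notMem hi, componentColoring_of_notMem hj,
    G.componentComplMk_eq_of_adj hi hj hij]
  exact Or.inl rfl

lemma edgeBinomial_mem_of_reachable (hP : binomialEdgeIdeal K G ≤ P.asIdeal)
    (hT : ∀ i, X (Sum.inl i) ∈ P.asIdeal ∧ X (Sum.inr i) ∈ P.asIdeal → i ∈ T)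
    {i j : ↥(Tᶜ)} (hij : (G.induce Tᶜ).Reachable i j) :
    edgeBinomial K i.1 j.1 ∈ P.asIdeal := by
  obtain ⟨p⟩ := hij
  induction p with
  | nil => simp [edgeBinomial]
  | @cons i k j hadj _ ih =>
    have hik : edgeBinomial K i.1 k.1 ∈ P.asIdeal := hP (Ideal.subset_span ⟨_, _, hadj, rfl⟩)
    exact edgeBinomial_mem_trans (fun h => k.2 (hT k.1 h)) hik ih

lemma cutPrime_le (hP : binomialEdgeIdeal K G ≤ P.asIdeal)
    (hT : ∀ i, i ∈ T ↔ X (Sum.inl i) ∈ P.asIdeal ∧ X (Sum.inr i) ∈ P.asIdeal) :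
    cutPrime K G T ≤ P := by
  refine coloringPrime_le (fun i hi => ?_) fun i j C hi hj => ?_
  · exact (hT i).1 (componentColoring_eq_none_iff.1 hi)
  · obtain ⟨hiT, hiC⟩ := componentColoring_eq_some_iff.1 hi
    obtain ⟨hjT, hjC⟩ := componentColoring_eq_some_iff.1 hj
    exact edgeBinomial_mem_of_reachable (i := ⟨i, hiT⟩) (j := ⟨j, hjT⟩) hP (fun k => (hT k).2)
      (ConnectedComponent.exact (hiC.trans hjC.symm))

lemma exists_cutPrime_le (hP : binomialEdgeIdeal K G ≤ P.asIdeal) :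
    ∃ T, cutPrime K G T ≤ P :=
  ⟨{i | X (Sum.inl i) ∈ P.asIdeal ∧ X (Sum.inr i) ∈ P.asIdeal}, cutPrime_le hP fun _ => Iff.rfl⟩

theorem minimalPrimes_binomialEdgeIdeal [Finite V] : (binomialEdgeIdeal K G).minimalPrimes =
    (fun T => (cutPrime K G T).asIdeal) '' {T | IsCutset G T} := by
  ext Q
  constructor
  · intro hQ
    obtain ⟨T, hTQ⟩ := exists_cutPrime_le (P := ⟨Q, hQ.1.1⟩) hQ.1.2
    have hmin (S : Set V) (hSQ : (cutPrime K G S).asIdeal ≤ Q) :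
        Q ≤ (cutPrime K G S).asIdeal :=
      hQ.2 ⟨(cutPrime K G S).isPrime, binomialEdgeIdeal_le_cutPrime⟩ hSQ
    refine ⟨T, (isCutset_iff_forall_cutPrime_le (K := K)).2 fun S hST => ?_,
      le_antisymm hTQ (hmin T hTQ)⟩
    have hTS : cutPrime K G T ≤ cutPrime K G S := hTQ.trans (hmin S (le_trans hST hTQ))
    exact (cutPrime_le_cutPrime_iff.1 hST).1.antisymm (cutPrime_le_cutPrime_iff.1 hTS).1
  · rintro ⟨T, hT, rfl⟩
    refine ⟨⟨(cutPrime K G T).isPrime, binomialEdgeIdeal_le_cutPrime⟩, fun Q hQ hQT => ?_⟩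
    obtain ⟨S, hSQ⟩ := exists_cutPrime_le (P := ⟨Q, hQ.1⟩) hQ.2
    exact isCutset_iff_forall_cutPrime_le.1 hT S (hSQ.trans hQT) ▸ hSQ

end CutPrime

theorem binomialEdgeIdeal_unmixed_iff_general (K : Type*) [Field K] {V : Type*} [Finite V]
    (G : SimpleGraph V) :
    IsUnmixed (binomialEdgeIdeal K G) ↔ ∀ T : Set V, IsCutset G T →
      Nat.card (G.ComponentCompl T) = T.ncard + Nat.card G.ConnectedComponent := by
  have h₀ : (cutPrime K G ∅).asIdeal ∈ (binomialEdgeIdeal K G).minimalPrimes := by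
    rw [minimalPrimes_binomialEdgeIdeal]
    exact ⟨∅, isCutset_empty, rfl⟩
  rw [isUnmixed_iff_of_mem_minimalPrimes h₀, minimalPrimes_binomialEdgeIdeal, Set.forall_mem_image]
  refine forall₂_congr fun T _ => ?_
  rw [htI_asIdeal, htI_asIdeal, height_cutPrime_eq_height_cutPrime_iff, card_componentCompl_empty,
    Set.ncard_empty, add_zero, add_comm T.ncard]

/-- Let `G` be a connected graph on `[n]`. Then `J_G` is unmixed if
and only if `c(T) = |T| + 1` for every `T` with the cutpoint property for `G`. -/
theorem binomialEdgeIdeal_unmixed_iff (K : Type*) [Field K] (n : ℕ)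
    (G : SimpleGraph (Fin n)) (hConn : G.Connected) :
    IsUnmixed (binomialEdgeIdeal K G) ↔
      ∀ T : Set (Fin n), HasCutpointProperty G T → cNum G Tᶜ = T.ncard + 1 := by
  simp only [binomialEdgeIdeal_unmixed_iff_general, hasCutpointProperty_iff_isCutset,
    card_connectedComponent_eq_one hConn]
  rfl

end
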